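/- arXiv:1306.4599 — 2 statements merged into one kernel-verified Lean document; each statement's English description precedes it below -/
import Mathlib

section
/- Let A be a noetherian ring and F : Mod_A → Ab an additive half-exact functor. Then F is bounded if and only if F is weakly bounded, i.e., F(M) is finitely generated for every finitely generated A-module M if and only if F(A/p) is a finitely generated A/p-module for every prime ideal p of A. -/
/-!
Statement 7: Let `A` be a noetherian ring and `F : Mod_A → Ab` an additive half-exact
functor (encoded as an additive `A`-linear functor `ModuleCat A ⥤ ModuleCat A`).  Then
`F` is bounded if and only if `F` is weakly bounded: `F(M)` is finitely generated for
every finitely generated `A`-module `M` if and only if `F(A/p)` is finitely generated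
(equivalently over `A` or over `A/p`, since `p` acts trivially) for every prime ideal
`p` of `A`.
-/

open CategoryTheory Limits

def IsHalfExact {A : Type} [CommRing A] (F : ModuleCat A ⥤ ModuleCat A) : Prop :=
  ∀ (M N P : ModuleCat A) (f : M ⟶ N) (g : N ⟶ P),
    Function.Injective f → Function.Surjective g → Function.Exact f g →
      Function.Exact (F.map f) (F.map g)

theorem statement_7 {A : Type} [CommRing A] [IsNoetherianRing A]
    (F : ModuleCat A ⥤ ModuleCat A) [F.Additive] [F.Linear A]
    (hhe : IsHalfExact F) :
    (∀ M : ModuleCat A, Module.Finite A M → Module.Finite A (F.obj M)) ↔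
      (∀ p : Ideal A, p.IsPrime → Module.Finite A (F.obj (ModuleCat.of A (A ⧸ p)))) := by
  constructor
  · intro h p _
    exact h _ (inferInstanceAs (Module.Finite A (A ⧸ p)))
  · intro h M hM
    refine IsNoetherianRing.induction_on_isQuotientEquivQuotientPrime A
      (M := M) (motive := fun N _ _ _ => Module.Finite A (F.obj (ModuleCat.of A N)))
      hM ?_ ?_ ?_
    · intro N _ _ _ _
      have h0 : IsZero (F.obj (ModuleCat.of A N)) :=
        F.map_isZero (ModuleCat.isZero_of_subsingleton _)
      have := ModuleCat.subsingleton_of_isZero h0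
      infer_instance
    · intro N _ _ _ p e
      have := h p.1 p.2
      exact Module.Finite.equiv (F.mapIso e.toModuleIso).symm.toLinearEquiv
    · intro N₁ _ _ _ N₂ _ _ _ N₃ _ _ _ f g hf hg hfg h₁ h₃
      have hex := hhe _ _ _ (ModuleCat.ofHom f) (ModuleCat.ofHom g) hf hg hfg
      have : IsNoetherian A (F.obj (ModuleCat.of A N₁)) := isNoetherian_of_isNoetherianRing_of_finite A _
      have : IsNoetherian A (F.obj (ModuleCat.of A N₃)) := isNoetherian_of_isNoetherianRing_of_finite A _
      have : IsNoetherian A (F.obj (ModuleCat.of A N₂)) :=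
        isNoetherian_of_range_eq_ker (F.map (ModuleCat.ofHom f)).hom
          (F.map (ModuleCat.ofHom g)).hom (LinearMap.exact_iff.mp hex).symm
      infer_instance
end

section
/- Let T be a scheme, t ∈ |T| a point of finite type (Spec κ(t) → T of finite type). Then t is locally closed in |T|: there exists an open subscheme U ⊆ T containing t such that t is a closed point of U. Furthermore, if f : X → Y is a morphism of schemes of finite type and x ∈ |X| is of finite type, then f(x) ∈ |Y| is of finite type. -/
open CategoryTheory AlgebraicGeometry

theorem aux_domain {A L K : Type*} [CommRing A] [IsDomain A] [Field L] [Field K] [Algebra A L]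
    [IsFractionRing A L] [Algebra A K] [Algebra L K] [IsScalarTower A L K]
    [hft : Algebra.FiniteType A K] :
    ∃ f : A, f ≠ 0 ∧ Algebra.adjoin A {(algebraMap A L f)⁻¹} = ⊤ := by
  classical
  have : Algebra.FiniteType L K := Algebra.FiniteType.of_restrictScalars_finiteType A L K
  have : Module.Finite L K := finite_of_finite_type_of_isJacobsonRing L K
  have : Algebra.IsAlgebraic A K :=
    ⟨fun x => (IsFractionRing.isAlgebraic_iff A L K).2 (Algebra.IsAlgebraic.isAlgebraic x)⟩
  obtain ⟨s, hs⟩ := hft.out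
  obtain ⟨f, hf, hint⟩ := Algebra.IsAlgebraic.exists_integral_multiples A s
  have hfL : algebraMap A L f ≠ 0 := by
    simpa using hf
  refine ⟨f, hf, ?_⟩
  set B := Algebra.adjoin A {(algebraMap A L f)⁻¹} with hB
  have hfB : (algebraMap A L f)⁻¹ ∈ B := Algebra.subset_adjoin rfl
  have hle : Algebra.adjoin A (s : Set K) ≤ (integralClosure B K).restrictScalars A := by
    refine Algebra.adjoin_le fun z hz => ?_
    change IsIntegral B z
    have h1 : IsIntegral B (f • z) := (hint z hz).tower_top
    have h2 : z = (⟨_, hfB⟩ : B) • (f • z) := by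
      rw [Subalgebra.smul_def]
      change z = (algebraMap A L f)⁻¹ • f • z
      rw [← algebraMap_smul L f z, smul_smul, inv_mul_cancel₀ hfL, one_smul]
    rw [h2]
    exact h1.smul _
  have : Algebra.IsIntegral B K := ⟨fun x => hle (hs ▸ Algebra.mem_top)⟩
  have hF : IsField B := isField_of_isIntegral_of_isField
    (S := K) (FaithfulSMul.algebraMap_injective B K) (Field.toIsField K)
  rw [eq_top_iff]
  rintro l -
  obtain ⟨a, b, hb, rfl⟩ := IsFractionRing.div_surjective A l
  have hb0 : algebraMap A L b ≠ 0 := by simpa using nonZeroDivisors.ne_zero hb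
  obtain ⟨c, hc⟩ := hF.mul_inv_cancel (a := algebraMap A B b) (fun h => hb0 (congrArg Subtype.val h))
  have hc' : algebraMap A L b * c = 1 := congrArg Subtype.val hc
  rw [div_eq_mul_inv, ← eq_inv_of_mul_eq_one_right hc']
  exact B.mul_mem (B.algebraMap_mem a) c.2

theorem aux_ring {R K : Type*} [CommRing R] (p : Ideal R) [p.IsPrime] [Field K]
    (φ : p.ResidueField →+* K) (h : (φ.comp (algebraMap R p.ResidueField)).FiniteType) :
    (algebraMap R p.ResidueField).FiniteType ∧
    ∃ f ∉ p, ∀ q : Ideal R, q.IsPrime → p ≤ q → f ∉ q → q = p := by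
  algebraize [φ, φ.comp (algebraMap R p.ResidueField), φ.comp (algebraMap (R ⧸ p) p.ResidueField)]
  have : IsScalarTower R (R ⧸ p) K := .of_algebraMap_eq fun x => rfl
  have : Algebra.FiniteType (R ⧸ p) K := .of_restrictScalars_finiteType R _ _
  obtain ⟨f, hf, htop⟩ := aux_domain (A := R ⧸ p) (L := p.ResidueField) (K := K)
  have hfL : algebraMap (R ⧸ p) p.ResidueField f ≠ 0 := by simpa using hf
  constructor
  · rw [RingHom.finiteType_algebraMap]
    have : Algebra.FiniteType (R ⧸ p) p.ResidueField :=
      ⟨⟨{(algebraMap (R ⧸ p) p.ResidueField f)⁻¹}, by simpa using htop⟩⟩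
    exact .trans (S := R ⧸ p) inferInstance inferInstance
  have key : ∀ l : p.ResidueField, ∃ (n : ℕ) (a : R ⧸ p),
      l * algebraMap _ _ f ^ n = algebraMap _ _ a := by
    intro l
    have hl : l ∈ Algebra.adjoin (R ⧸ p) {(algebraMap (R ⧸ p) p.ResidueField f)⁻¹} :=
      htop ▸ Algebra.mem_top
    induction hl using Algebra.adjoin_induction with
    | mem x hx => exact ⟨1, 1, by rw [Set.mem_singleton_iff.1 hx]; simp [hfL]⟩
    | algebraMap r => exact ⟨0, r, by simp⟩
    | add x y _ _ hx hy =>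
      obtain ⟨n, a, ha⟩ := hx
      obtain ⟨m, b, hb⟩ := hy
      refine ⟨n + m, a * f ^ m + b * f ^ n, ?_⟩
      simp only [map_add, map_mul, map_pow, ← ha, ← hb]; ring
    | mul x y _ _ hx hy =>
      obtain ⟨n, a, ha⟩ := hx
      obtain ⟨m, b, hb⟩ := hy
      refine ⟨n + m, a * b, ?_⟩
      simp only [map_mul, ← ha, ← hb]; ring
  obtain ⟨f, rfl⟩ := Ideal.Quotient.mk_surjective f
  refine ⟨f, fun h => hf (Ideal.Quotient.eq_zero_iff_mem.2 h), fun q hq hpq hfq => ?_⟩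
  refine le_antisymm (fun b hb => ?_) hpq
  by_contra hbp
  obtain ⟨n, a, ha⟩ := key (algebraMap (R ⧸ p) _ (Ideal.Quotient.mk p b))⁻¹
  obtain ⟨a, rfl⟩ := Ideal.Quotient.mk_surjective a
  have hb0 : algebraMap (R ⧸ p) p.ResidueField (Ideal.Quotient.mk p b) ≠ 0 := by
    simpa [Ideal.Quotient.eq_zero_iff_mem] using hbp
  rw [inv_mul_eq_iff_eq_mul₀ hb0, ← map_pow, ← map_mul, ← map_pow, ← map_mul] at ha
  have := Ideal.Quotient.eq.1 ((FaithfulSMul.algebraMap_injective (R ⧸ p) p.ResidueField) ha)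
  refine hfq (hq.mem_of_pow_mem n ?_)
  have h2 := q.add_mem (hpq this) (q.mul_mem_right a hb)
  simpa using h2

theorem aux_affine {R : CommRingCat} (p : Spec R) (K : CommRingCat) (hK : IsField K)
    (φ : (Spec R).residueField p ⟶ K)
    (h : LocallyOfFiniteType (Spec.map φ ≫ (Spec R).fromSpecResidueField p)) :
    LocallyOfFiniteType ((Spec R).fromSpecResidueField p) ∧
    ∃ U : Set (Spec R), IsOpen U ∧ p ∈ U ∧ ∀ z ∈ U, p ⤳ z → z = p := by
  let := hK.toField
  have hpp : p.asIdeal.IsPrime := PrimeSpectrum.isPrime p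
  rw [← Scheme.Spec.map_residueFieldIso_inv_eq_fromSpecResidueField, ← Spec.map_comp,
    ← Spec.map_comp, HasRingHomProperty.Spec_iff (P := @LocallyOfFiniteType)] at h
  obtain ⟨h1, f, hf, h2⟩ := aux_ring p.asIdeal
    (((Scheme.Spec.residueFieldIso R p).inv ≫ φ).hom) h
  constructor
  · rw [← Scheme.Spec.map_residueFieldIso_inv_eq_fromSpecResidueField]
    have : LocallyOfFiniteType
        (Spec.map (CommRingCat.ofHom (algebraMap R p.asIdeal.ResidueField))) := by
      rw [HasRingHomProperty.Spec_iff (P := @LocallyOfFiniteType)]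
      exact h1
    infer_instance
  · refine ⟨(PrimeSpectrum.basicOpen f : Set (PrimeSpectrum R)),
      (PrimeSpectrum.basicOpen f).isOpen, hf, fun z hz hpz => ?_⟩
    exact PrimeSpectrum.ext (h2 z.asIdeal z.isPrime
      ((PrimeSpectrum.le_iff_specializes p z).2 hpz) hz)

theorem aux_open {R : CommRingCat} {Y : Scheme} (g : Spec R ⟶ Y) [IsOpenImmersion g]
    (p : Spec R) (K : CommRingCat) (hK : IsField K)
    (φ : Y.residueField (g p) ⟶ K)
    (h : LocallyOfFiniteType (Spec.map φ ≫ Y.fromSpecResidueField (g p))) :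
    LocallyOfFiniteType (Y.fromSpecResidueField (g p)) ∧
    ∃ U : Set Y, IsOpen U ∧ g p ∈ U ∧ ∀ z ∈ U, g p ⤳ z → z = g p := by
  have e : Y.fromSpecResidueField (g p) =
      Spec.map (inv (g.residueFieldMap p)) ≫ (Spec R).fromSpecResidueField p ≫ g := by
    rw [← Scheme.Hom.SpecMap_residueFieldMap_fromSpecResidueField, ← Spec.map_comp_assoc]
    simp
  have h' : LocallyOfFiniteType
      (Spec.map (inv (g.residueFieldMap p) ≫ φ) ≫ (Spec R).fromSpecResidueField p) := by
    have : LocallyOfFiniteType ((Spec.map (inv (g.residueFieldMap p) ≫ φ) ≫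
      (Spec R).fromSpecResidueField p) ≫ g) := by
      rw [e] at h
      simpa using h
    exact locallyOfFiniteType_of_comp _ g
  obtain ⟨h1, U, hU, hpU, h2⟩ := aux_affine p K hK _ h'
  refine ⟨by rw [e]; infer_instance, g '' U, g.isOpenEmbedding.isOpenMap _ hU, ⟨p, hpU, rfl⟩, ?_⟩
  rintro _ ⟨z, hz, rfl⟩ hs
  rw [h2 z hz (g.isOpenEmbedding.isInducing.specializes_iff.1 hs)]

theorem aux_scheme {Y : Scheme} (y : Y) (K : CommRingCat) (hK : IsField K)
    (φ : Y.residueField y ⟶ K)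
    (h : LocallyOfFiniteType (Spec.map φ ≫ Y.fromSpecResidueField y)) :
    LocallyOfFiniteType (Y.fromSpecResidueField y) ∧
    ∃ U : Set Y, IsOpen U ∧ y ∈ U ∧ ∀ z ∈ U, y ⤳ z → z = y := by
  obtain ⟨p, hp⟩ := Y.affineCover.covers y
  have hi : IsOpenImmersion (Y.affineCover.f (Scheme.Cover.idx Y.affineCover y)) := inferInstance
  revert φ h
  rw [← hp]
  intro φ h
  exact @aux_open _ _ _ hi p K hK φ h

theorem statement_17 {T : Scheme} (t : T)
    (ht : LocallyOfFiniteType (T.fromSpecResidueField t))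
    {X Y : Scheme} (f : X ⟶ Y) [LocallyOfFiniteType f] (x : X)
    (hx : LocallyOfFiniteType (X.fromSpecResidueField x)) :
    (∃ U : Set T, IsOpen U ∧ t ∈ U ∧ IsClosed {y : U | (y : T) = t}) ∧
    IsLocallyClosed ({t} : Set T) ∧
    LocallyOfFiniteType (Y.fromSpecResidueField (f.base x)) := by
  obtain ⟨-, U, hU, htU, h⟩ := aux_scheme t (T.residueField t) (Field.toIsField _) (𝟙 _)
    (by simpa using ht)
  have heq : U ∩ closure {t} = {t} := by
    ext z
    constructor
    · rintro ⟨hz, hc⟩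
      exact h z hz (specializes_iff_mem_closure.2 hc)
    · rintro rfl
      exact ⟨htU, subset_closure rfl⟩
  refine ⟨⟨U, hU, htU, ?_⟩, ⟨U, closure {t}, hU, isClosed_closure, heq.symm⟩, ?_⟩
  · have : {y : U | (y : T) = t} = Subtype.val ⁻¹' closure {t} := by
      ext z
      constructor
      · intro hz
        exact subset_closure hz
      · intro hz
        exact h z z.2 (specializes_iff_mem_closure.2 hz)
    rw [this]
    exact isClosed_closure.preimage continuous_subtype_val
  · refine (aux_scheme (f.base x) (X.residueField x) (Field.toIsField _)
      (f.residueFieldMap x) ?_).1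
    have := Scheme.Hom.SpecMap_residueFieldMap_fromSpecResidueField f x
    exact this ▸ inferInstance
end
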